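/- Let L_β(s, v, θ) := L₀(s, v, θ) + β c(s) be an augmented Lagrangian with smooth L₀ and cost c depending only on position. Suppose (β, θ) ↦ s^β(θ) is a smooth family of curves on [0,T] each solving the Euler-Lagrange equation for L_β, and suppose the boundary values satisfy: (i) s^β_0(θ) = α and ṡ^β_0(θ) = γ independent of (β, θ) fails, but instead (ii) s^β_T(θ) and ṡ^β_T(θ) are independent of β, and (iii) s^0_0(θ) and ṡ^0_0(θ) are independent of θ. Then the gradient of the cost C(θ) = ∫₀ᵀ c(s^0_t(θ)) dt satisfies d_θ C(θ) = lim_{β→0} (1/β)[ ∫₀ᵀ (∂_θ L_β(s^β_t, ṡ^β_t, θ) - ∂_θ L₀(s^0_t, ṡ^0_t, θ)) dt + (∂_{θ,ṡ} L₀(s^0_0, ṡ^0_0, θ))ᵀ (s^β_0 - s^0_0) ]. -/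

import Mathlib

open scoped RealInnerProductSpace Topology

section Helpers

variable {P X F : Type*} [NormedAddCommGroup P] [NormedSpace ℝ P]
  [NormedAddCommGroup X] [NormedSpace ℝ X] [NormedAddCommGroup F] [NormedSpace ℝ F]

/-- Differentiation under the integral sign for a `C¹` integrand. -/
lemma glep_param_integral [FiniteDimensional ℝ P] (T : ℝ) (f : P × ℝ → F)
    (hf : ContDiff ℝ 1 f) (u : P) :
    HasFDerivAt (fun x => ∫ t in (0:ℝ)..T, f (x, t))
      (∫ t in (0:ℝ)..T, (fderiv ℝ f (u, t)).comp (ContinuousLinearMap.inl ℝ P ℝ)) u := by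
  have hcont : Continuous f := hf.continuous
  have hcf' : Continuous fun z : P × ℝ => (fderiv ℝ f z).comp (ContinuousLinearMap.inl ℝ P ℝ) :=
    (hf.continuous_fderiv (by norm_num)).clm_comp continuous_const
  have : ProperSpace P := FiniteDimensional.proper ℝ P
  obtain ⟨B, hB⟩ := ((isCompact_closedBall u 1).prod (isCompact_uIcc (a := (0:ℝ)) (b := T))
    ).exists_bound_of_continuousOn hcf'.continuousOn
  refine intervalIntegral.hasFDerivAt_integral_of_dominated_of_fderiv_le
    (F' := fun x t => (fderiv ℝ f (x, t)).comp (ContinuousLinearMap.inl ℝ P ℝ))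
    (bound := fun _ => B)
    (Metric.closedBall_mem_nhds u one_pos) ?_ ?_ ?_ ?_ ?_ ?_
  · exact Filter.Eventually.of_forall fun x =>
      (by fun_prop : Continuous fun t => f (x, t)).aestronglyMeasurable
  · exact (by fun_prop : Continuous fun t => f (u, t)).intervalIntegrable _ _
  · exact (hcf'.comp (by fun_prop : Continuous fun t : ℝ => (u, t))).aestronglyMeasurable
  · exact Filter.Eventually.of_forall fun t ht x hx =>
      hB (x, t) ⟨hx, Set.uIoc_subset_uIcc ht⟩
  · exact intervalIntegrable_const
  · refine Filter.Eventually.of_forall fun t ht x hx => ?_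
    have h1 := (hf.differentiable (by norm_num) (x, t)).hasFDerivAt
    exact h1.comp x (hasFDerivAt_prodMk_left x t)

/-- velocity -/
noncomputable def glepVel (σ : P × ℝ → X) (z : P × ℝ) : X := fderiv ℝ σ z (0, 1)

/-- lifted curve -/
noncomputable def glepN (σ : P × ℝ → X) (z : P × ℝ) : (X × X) × P := ((σ z, glepVel σ z), z.1)

/-- momentum -/
noncomputable def glepMom (M : (X × X) × P → ℝ) (σ : P × ℝ → X) (z : P × ℝ) : X →L[ℝ] ℝ :=
  (fderiv ℝ M (glepN σ z)).comp
    ((ContinuousLinearMap.inl ℝ (X × X) P).comp (ContinuousLinearMap.inr ℝ X X))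

/-- force -/
noncomputable def glepForce (M : (X × X) × P → ℝ) (σ : P × ℝ → X) (z : P × ℝ) : X →L[ℝ] ℝ :=
  (fderiv ℝ M (glepN σ z)).comp
    ((ContinuousLinearMap.inl ℝ (X × X) P).comp (ContinuousLinearMap.inl ℝ X X))

/-- explicit parameter derivative -/
noncomputable def glepPar (M : (X × X) × P → ℝ) (σ : P × ℝ → X) (z : P × ℝ) : P →L[ℝ] ℝ :=
  (fderiv ℝ M (glepN σ z)).comp (ContinuousLinearMap.inr ℝ (X × X) P)

/-- parameter sensitivity of the trajectory -/
noncomputable def glepSens (σ : P × ℝ → X) (z : P × ℝ) : P →L[ℝ] X :=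
  (fderiv ℝ σ z).comp (ContinuousLinearMap.inl ℝ P ℝ)

/-- derivative of the action -/
noncomputable def glepDA (T : ℝ) (M : (X × X) × P → ℝ) (σ : P × ℝ → X) (u : P) : P →L[ℝ] ℝ :=
  (∫ t in (0:ℝ)..T, glepPar M σ (u, t))
    + ((glepMom M σ (u, T)).comp (glepSens σ (u, T))
      - (glepMom M σ (u, 0)).comp (glepSens σ (u, 0)))

lemma glep_fderiv_contDiff {σ : P → X} (hσ : ContDiff ℝ 2 σ) : ContDiff ℝ 1 (fderiv ℝ σ) :=
  hσ.fderiv_right (by norm_num)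

lemma glepVel_contDiff {σ : P × ℝ → X} (hσ : ContDiff ℝ 2 σ) : ContDiff ℝ 1 (glepVel σ) :=
  (glep_fderiv_contDiff hσ).clm_apply contDiff_const

lemma glepN_contDiff {σ : P × ℝ → X} (hσ : ContDiff ℝ 2 σ) : ContDiff ℝ 1 (glepN σ) :=
  ((hσ.of_le (by norm_num)).prodMk (glepVel_contDiff hσ)).prodMk contDiff_fst

lemma glepMom_contDiff {M : (X × X) × P → ℝ} (hM : ContDiff ℝ 2 M)
    {σ : P × ℝ → X} (hσ : ContDiff ℝ 2 σ) : ContDiff ℝ 1 (glepMom M σ) :=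
  ((glep_fderiv_contDiff hM).comp (glepN_contDiff hσ)).clm_comp contDiff_const

lemma glepForce_contDiff {M : (X × X) × P → ℝ} (hM : ContDiff ℝ 2 M)
    {σ : P × ℝ → X} (hσ : ContDiff ℝ 2 σ) : ContDiff ℝ 1 (glepForce M σ) :=
  ((glep_fderiv_contDiff hM).comp (glepN_contDiff hσ)).clm_comp contDiff_const

lemma glepPar_contDiff {M : (X × X) × P → ℝ} (hM : ContDiff ℝ 2 M)
    {σ : P × ℝ → X} (hσ : ContDiff ℝ 2 σ) : ContDiff ℝ 1 (glepPar M σ) :=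
  ((glep_fderiv_contDiff hM).comp (glepN_contDiff hσ)).clm_comp contDiff_const

lemma glepSens_contDiff {σ : P × ℝ → X} (hσ : ContDiff ℝ 2 σ) : ContDiff ℝ 1 (glepSens σ) :=
  (glep_fderiv_contDiff hσ).clm_comp contDiff_const

lemma glep_symm {σ : P → X} (hσ : ContDiff ℝ 2 σ) (z a b : P) :
    fderiv ℝ (fderiv ℝ σ) z a b = fderiv ℝ (fderiv ℝ σ) z b a :=
  (hσ.contDiffAt.isSymmSndFDerivAt (by simp)) a b

lemma glepVel_fderiv {σ : P × ℝ → X} (hσ : ContDiff ℝ 2 σ) (z a : P × ℝ) :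
    fderiv ℝ (glepVel σ) z a = fderiv ℝ (fderiv ℝ σ) z a (0, 1) := by
  have h := ((glep_fderiv_contDiff hσ).differentiable (by norm_num) z).hasFDerivAt
  have h2 : HasFDerivAt (glepVel σ) _ z := h.clm_apply (hasFDerivAt_const ((0:P), (1:ℝ)) z)
  rw [h2.fderiv]
  simp

/-- time derivative of the sensitivity -/
lemma glepSens_hasDerivAt {σ : P × ℝ → X} (hσ : ContDiff ℝ 2 σ) (u h : P) (t : ℝ) :
    HasDerivAt (fun τ => glepSens σ (u, τ) h) (fderiv ℝ (glepVel σ) (u, t) (h, 0)) t := by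
  have h1 := ((glep_fderiv_contDiff hσ).differentiable (by norm_num) (u, t)).hasFDerivAt
  have h2 : HasFDerivAt (fun z => fderiv ℝ σ z (h, (0:ℝ))) _ (u, t) :=
    h1.clm_apply (hasFDerivAt_const (h, (0:ℝ)) (u, t))
  have h3 : HasDerivAt (fun τ : ℝ => (u, τ)) ((0:P), (1:ℝ)) t :=
    (hasDerivAt_const t u).prodMk (hasDerivAt_id t)
  have h4 := h2.comp_hasDerivAt t h3
  convert! h4 using 1
  rw [glepVel_fderiv hσ, glep_symm hσ]
  simp

/-- The first variation formula: the action is differentiable with derivative `glepDA`. -/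
lemma glep_action [FiniteDimensional ℝ P] {T : ℝ} (hT : 0 < T) {M : (X × X) × P → ℝ}
    (hM : ContDiff ℝ 2 M) {σ : P × ℝ → X} (hσ : ContDiff ℝ 2 σ)
    (hEL : ∀ u, ∀ t ∈ Set.Icc (0:ℝ) T,
      HasDerivAt (fun τ => glepMom M σ (u, τ)) (glepForce M σ (u, t)) t) (u : P) :
    HasFDerivAt (fun u => ∫ t in (0:ℝ)..T, M (glepN σ (u, t))) (glepDA T M σ u) u := by
  have hf : ContDiff ℝ 1 (fun z => M (glepN σ z)) := (hM.of_le (by norm_num)).comp (glepN_contDiff hσ)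
  have h0 := glep_param_integral T _ hf u
  suffices hh : glepDA T M σ u = ∫ t in (0:ℝ)..T, (fderiv ℝ (fun z => M (glepN σ z)) (u, t)).comp
      (ContinuousLinearMap.inl ℝ P ℝ) by
    rw [hh]; exact h0
  have hct : Continuous fun t : ℝ => (u, t) := by fun_prop
  have hi1 : Continuous fun t : ℝ => (fderiv ℝ (fun z => M (glepN σ z)) (u, t)).comp
      (ContinuousLinearMap.inl ℝ P ℝ) :=
    ((hf.continuous_fderiv (by norm_num)).comp hct).clm_comp continuous_const
  have hi2 : Continuous fun t : ℝ => glepPar M σ (u, t) :=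
    (glepPar_contDiff hM hσ).continuous.comp hct
  ext h
  rw [glepDA, add_apply,
    ContinuousLinearMap.intervalIntegral_apply (hi2.intervalIntegrable _ _),
    ContinuousLinearMap.intervalIntegral_apply (hi1.intervalIntegrable _ _)]
  have hd : ∀ t ∈ Set.uIcc (0:ℝ) T, HasDerivAt (fun τ => glepMom M σ (u, τ) (glepSens σ (u, τ) h))
      (glepForce M σ (u, t) (glepSens σ (u, t) h)
        + glepMom M σ (u, t) (fderiv ℝ (glepVel σ) (u, t) (h, 0))) t := by
    intro t ht
    rw [Set.uIcc_of_le hT.le] at ht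
    exact (hEL u t ht).clm_apply (glepSens_hasDerivAt hσ u h t)
  have hcd : Continuous fun t : ℝ => (glepForce M σ (u, t) (glepSens σ (u, t) h)
        + glepMom M σ (u, t) (fderiv ℝ (glepVel σ) (u, t) (h, 0))) := by
    have c1 := (glepForce_contDiff hM hσ).continuous.comp hct
    have c2 := (glepMom_contDiff hM hσ).continuous.comp hct
    have c3 := (glepSens_contDiff hσ).continuous.comp hct
    have c4 := ((glepVel_contDiff hσ).continuous_fderiv (by norm_num)).comp hct
    exact (c1.clm_apply (c3.clm_apply continuous_const)).add
      (c2.clm_apply (c4.clm_apply continuous_const))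
  have hFTC := intervalIntegral.integral_eq_sub_of_hasDerivAt hd (hcd.intervalIntegrable _ _)
  have e : ((glepMom M σ (u, T)).comp (glepSens σ (u, T))
      - (glepMom M σ (u, 0)).comp (glepSens σ (u, 0))) h
      = ∫ t in (0:ℝ)..T, (glepForce M σ (u, t) (glepSens σ (u, t) h)
        + glepMom M σ (u, t) (fderiv ℝ (glepVel σ) (u, t) (h, 0))) := by
    rw [hFTC]; simp
  rw [e, ← intervalIntegral.integral_add
    ((hi2.clm_apply continuous_const).intervalIntegrable _ _) (hcd.intervalIntegrable _ _)]
  refine intervalIntegral.integral_congr fun t _ => ?_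
  have hMd := (hM.differentiable (by norm_num) (glepN σ (u, t))).hasFDerivAt
  have hσd := (hσ.differentiable (by norm_num) (u, t)).hasFDerivAt
  have hVd := ((glepVel_contDiff hσ).differentiable (by norm_num) (u, t)).hasFDerivAt
  have hNd : HasFDerivAt (glepN σ) _ (u, t) := (hσd.prodMk hVd).prodMk hasFDerivAt_fst
  have hc : HasFDerivAt (fun z => M (glepN σ z)) _ (u, t) := hMd.comp (u, t) hNd
  simp only [hc.fderiv, glepPar, glepForce, glepMom, glepSens, ContinuousLinearMap.comp_apply,
    ← map_add]
  congr 1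
  simp

lemma glepDA_differentiable [FiniteDimensional ℝ P] {T : ℝ} {M : (X × X) × P → ℝ}
    (hM : ContDiff ℝ 2 M) {σ : P × ℝ → X} (hσ : ContDiff ℝ 2 σ) :
    Differentiable ℝ (glepDA T M σ) := by
  intro u
  have h1 := (glep_param_integral T _ (glepPar_contDiff hM hσ) u).differentiableAt
  have hm : Differentiable ℝ (glepMom M σ) := (glepMom_contDiff hM hσ).differentiable (by norm_num)
  have hs : Differentiable ℝ (glepSens σ) := (glepSens_contDiff hσ).differentiable (by norm_num)
  have hp : ∀ t : ℝ, DifferentiableAt ℝ (fun u : P => (u, t)) u := fun t => by fun_prop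
  have h2 : ∀ t : ℝ, DifferentiableAt ℝ
      (fun u : P => (glepMom M σ (u, t)).comp (glepSens σ (u, t))) u := fun t =>
    (((hm _).comp u (hp t)) : DifferentiableAt ℝ (fun u : P => glepMom M σ (u, t)) u).clm_comp
      (((hs _).comp u (hp t)) : DifferentiableAt ℝ (fun u : P => glepSens σ (u, t)) u)
  exact h1.add ((h2 T).sub (h2 0))

/-- Equality of mixed directional derivatives of the action. -/
lemma glep_mixed [FiniteDimensional ℝ P] {T : ℝ} (hT : 0 < T) {M : (X × X) × P → ℝ}
    (hM : ContDiff ℝ 2 M) {σ : P × ℝ → X} (hσ : ContDiff ℝ 2 σ)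
    (hEL : ∀ u, ∀ t ∈ Set.Icc (0:ℝ) T,
      HasDerivAt (fun τ => glepMom M σ (u, τ)) (glepForce M σ (u, t)) t) (u a b : P)
    {φ' ψ' : ℝ} (hφ : HasDerivAt (fun x : ℝ => glepDA T M σ (u + x • a) b) φ' 0)
    (hψ : HasDerivAt (fun x : ℝ => glepDA T M σ (u + x • b) a) ψ' 0) : φ' = ψ' := by
  have hd := (glepDA_differentiable (T := T) hM hσ u).hasFDerivAt
  have hs := second_derivative_symmetric (glep_action hT hM hσ hEL) hd a b
  have key : ∀ a b : P, HasDerivAt (fun x : ℝ => glepDA T M σ (u + x • a) b)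
      (fderiv ℝ (glepDA T M σ) u a b) 0 := by
    intro a b
    have hl : HasDerivAt (fun x : ℝ => u + x • a) a 0 := by
      simpa using ((hasDerivAt_id (0:ℝ)).smul_const a).const_add u
    have hd' : HasFDerivAt (glepDA T M σ) (fderiv ℝ (glepDA T M σ) u) (u + (0:ℝ) • a) := by
      simpa using hd
    have h2 := hd'.comp_hasDerivAt (0:ℝ) hl
    simpa using h2.clm_apply (hasDerivAt_const (0:ℝ) b)
  rw [hφ.unique (key a b), hψ.unique (key b a), hs]

end Helpers

section Helpers2

variable {P X F : Type*} [NormedAddCommGroup P] [NormedSpace ℝ P]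
  [NormedAddCommGroup X] [NormedSpace ℝ X] [NormedAddCommGroup F] [NormedSpace ℝ F]

lemma glep_line {f : P × ℝ → F} (hf : Differentiable ℝ f) (u a : P) (t : ℝ) :
    HasDerivAt (fun x : ℝ => f (u + x • a, t)) (fderiv ℝ f (u, t) (a, 0)) 0 := by
  have hl : HasDerivAt (fun x : ℝ => (u + x • a, t)) (a, (0:ℝ)) 0 := by
    refine HasDerivAt.prodMk ?_ (hasDerivAt_const _ _)
    simpa using ((hasDerivAt_id (0:ℝ)).smul_const a).const_add u
  have hd' : HasFDerivAt f (fderiv ℝ f (u, t)) (u + (0:ℝ) • a, t) := by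
    simpa using (hf (u, t)).hasFDerivAt
  exact hd'.comp_hasDerivAt (0:ℝ) hl

lemma glepSens_line {σ : P × ℝ → X} (hσ : ContDiff ℝ 2 σ) (u a : P) (t : ℝ) :
    HasDerivAt (fun x : ℝ => σ (u + x • a, t)) (glepSens σ (u, t) a) 0 := by
  have := glep_line (hσ.differentiable (by norm_num)) u a t
  simpa [glepSens] using this

lemma glepSens_fderiv {σ : P × ℝ → X} (hσ : ContDiff ℝ 2 σ) (z a : P × ℝ) (b : P) :
    fderiv ℝ (glepSens σ) z a b = fderiv ℝ (fderiv ℝ σ) z a (b, 0) := by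
  have h := ((glep_fderiv_contDiff hσ).differentiable (by norm_num) z).hasFDerivAt
  have h2 : HasFDerivAt (glepSens σ) _ z :=
    h.clm_comp (hasFDerivAt_const (ContinuousLinearMap.inl ℝ P ℝ) z)
  rw [h2.fderiv]
  simp

lemma glepSens_symm {σ : P × ℝ → X} (hσ : ContDiff ℝ 2 σ) (u a b : P) (t : ℝ) :
    fderiv ℝ (glepSens σ) (u, t) (a, 0) b = fderiv ℝ (glepSens σ) (u, t) (b, 0) a := by
  rw [glepSens_fderiv hσ, glepSens_fderiv hσ, glep_symm hσ]

lemma glepVel_eq {σ : P × ℝ → X} (hσ : ContDiff ℝ 2 σ) (u : P) (t : ℝ) :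
    deriv (fun τ => σ (u, τ)) t = glepVel σ (u, t) := by
  have h3 : HasDerivAt (fun τ : ℝ => (u, τ)) ((0:P), (1:ℝ)) t :=
    (hasDerivAt_const t u).prodMk (hasDerivAt_id t)
  exact ((hσ.differentiable (by norm_num) (u, t)).hasFDerivAt.comp_hasDerivAt t h3).deriv

lemma glep_tendsto {k : ℕ} {α : Type*} {l : Filter α} {f : α → EuclideanSpace ℝ (Fin k)}
    {y : EuclideanSpace ℝ (Fin k)}
    (h : ∀ e, Filter.Tendsto (fun x => ⟪f x, e⟫) l (𝓝 ⟪y, e⟫)) : Filter.Tendsto f l (𝓝 y) := by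
  let b := EuclideanSpace.basisFun (Fin k) ℝ
  have e1 : ∀ v, ∑ i, ⟪v, b i⟫ • b i = v := fun v => by
    conv_rhs => rw [← b.sum_repr' v]
    exact Finset.sum_congr rfl fun i _ => by rw [real_inner_comm]
  rw [← e1 y]
  have h' : Filter.Tendsto (fun x => ∑ i, ⟪f x, b i⟫ • b i) l (𝓝 (∑ i, ⟪y, b i⟫ • b i)) :=
    tendsto_finsetSum _ fun i _ => (h (b i)).smul_const _
  exact h'.congr fun x => e1 (f x)

section Partials

variable {E : Type*} [NormedAddCommGroup E] [NormedSpace ℝ E]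
  {L₀ : X → X → E → ℝ} {c : X → ℝ}

/-- augmented Lagrangian -/
def glepM (L₀ : X → X → E → ℝ) (c : X → ℝ) (q : (X × X) × (ℝ × E)) : ℝ :=
  L₀ q.1.1 q.1.2 q.2.2 + q.2.1 * c q.1.1

lemma glepM_contDiff (hL₀ : ContDiff ℝ 2 (fun q : (X × X) × E => L₀ q.1.1 q.1.2 q.2))
    (hc : ContDiff ℝ 2 c) : ContDiff ℝ 2 (glepM L₀ c) := by
  have h1 : ContDiff ℝ 2 (fun q : (X × X) × (ℝ × E) => ((q.1, q.2.2) : (X × X) × E)) := by fun_prop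
  have h2 : ContDiff ℝ 2 (fun q : (X × X) × (ℝ × E) => q.2.1) := by fun_prop
  have h3 : ContDiff ℝ 2 (fun q : (X × X) × (ℝ × E) => q.1.1) := by fun_prop
  exact (hL₀.comp h1).add (h2.mul (hc.comp h3))

lemma glepM_v (hM : ContDiff ℝ 2 (glepM L₀ c)) (a v : X) (β : ℝ) (θ : E) :
    fderiv ℝ (fun w => L₀ a w θ) v = (fderiv ℝ (glepM L₀ c) ((a, v), (β, θ))).comp
      ((ContinuousLinearMap.inl ℝ (X × X) (ℝ × E)).comp (ContinuousLinearMap.inr ℝ X X)) := by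
  have h1 := (hM.differentiable (by norm_num) ((a, v), (β, θ))).hasFDerivAt
  have h2 : HasFDerivAt (fun w : X => ((a, w), (β, θ))) ((ContinuousLinearMap.inl ℝ (X × X) (ℝ × E)).comp
      (ContinuousLinearMap.inr ℝ X X)) v :=
    HasFDerivAt.comp (g := fun p : X × X => (p, (β, θ))) v
      (hasFDerivAt_prodMk_left (a, v) (β, θ)) (hasFDerivAt_prodMk_right a v)
  have h3' := h1.comp v h2
  have h3 : HasFDerivAt (fun w => L₀ a w θ + β * c a) _ v := h3'
  rw [← h3.fderiv, fderiv_add_const]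

lemma glepM_a (hc : ContDiff ℝ 2 c) (hM : ContDiff ℝ 2 (glepM L₀ c)) (a v : X) (β : ℝ) (θ : E) :
    fderiv ℝ (fun a => L₀ a v θ) a + β • fderiv ℝ c a
      = (fderiv ℝ (glepM L₀ c) ((a, v), (β, θ))).comp
      ((ContinuousLinearMap.inl ℝ (X × X) (ℝ × E)).comp (ContinuousLinearMap.inl ℝ X X)) := by
  have h1 := (hM.differentiable (by norm_num) ((a, v), (β, θ))).hasFDerivAt
  have h2 : HasFDerivAt (fun w : X => ((w, v), (β, θ))) ((ContinuousLinearMap.inl ℝ (X × X) (ℝ × E)).comp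
      (ContinuousLinearMap.inl ℝ X X)) a :=
    HasFDerivAt.comp (g := fun p : X × X => (p, (β, θ))) a
      (hasFDerivAt_prodMk_left (a, v) (β, θ)) (hasFDerivAt_prodMk_left a v)
  have h3' := h1.comp a h2
  have h3 : HasFDerivAt (fun w => L₀ w v θ + β * c w) _ a := h3'
  have h4 : HasFDerivAt (fun w => β * c w) (β • fderiv ℝ c a) a :=
    ((hc.differentiable (by norm_num) a).hasFDerivAt).const_mul β
  have h5 := h3.sub h4
  have h6 : (fun w => L₀ w v θ) = (fun w => L₀ w v θ + β * c w) - (fun w => β * c w) := by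
    ext w; simp
  rw [h6, h5.fderiv]
  simp

lemma glepM_θ (hM : ContDiff ℝ 2 (glepM L₀ c)) (a v : X) (β : ℝ) (θ : E) (e : E) :
    fderiv ℝ (fun θ' => L₀ a v θ' + β * c a) θ e
      = (fderiv ℝ (glepM L₀ c) ((a, v), (β, θ))).comp
      (ContinuousLinearMap.inr ℝ (X × X) (ℝ × E)) (0, e) := by
  have h1 := (hM.differentiable (by norm_num) ((a, v), (β, θ))).hasFDerivAt
  have h2 : HasFDerivAt (fun w : E => ((a, v), (β, w))) ((ContinuousLinearMap.inr ℝ (X × X) (ℝ × E)).comp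
      (ContinuousLinearMap.inr ℝ ℝ E)) θ :=
    HasFDerivAt.comp (g := fun p : ℝ × E => ((a, v), p)) θ
      (hasFDerivAt_prodMk_right (a, v) (β, θ)) (hasFDerivAt_prodMk_right β θ)
  have h3' := h1.comp θ h2
  have h3 : HasFDerivAt (fun w => L₀ a v w + β * c a) _ θ := h3'
  rw [h3.fderiv]
  simp

lemma glepM_β (hM : ContDiff ℝ 2 (glepM L₀ c)) (a v : X) (β : ℝ) (θ : E) :
    (fderiv ℝ (glepM L₀ c) ((a, v), (β, θ))).comp
      (ContinuousLinearMap.inr ℝ (X × X) (ℝ × E)) (1, 0) = c a := by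
  have h1 := (hM.differentiable (by norm_num) ((a, v), (β, θ))).hasFDerivAt
  have h2 : HasDerivAt (fun w : ℝ => ((a, v), (w, θ))) (((0:X), (0:X)), ((1:ℝ), (0:E))) β :=
    (hasDerivAt_const _ _).prodMk ((hasDerivAt_id β).prodMk (hasDerivAt_const _ _))
  have h3' := h1.comp_hasDerivAt β h2
  have h3 : HasDerivAt (fun w => L₀ a v θ + w * c a) _ β := h3'
  have h4 : HasDerivAt (fun w => L₀ a v θ + w * c a) (c a) β := by
    simpa using ((hasDerivAt_id β).mul_const (c a)).const_add (L₀ a v θ)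
  rw [← h3.unique h4]
  rfl

end Partials

end Helpers2


/-- PFVP gradient estimator of Generalized Lagrangian Equilibrium
Propagation. If the nudged Euler-Lagrange trajectories of the augmented Lagrangian
`L_β = L₀ + β c` share their final position and velocity with the free trajectory
(β-independence at `t = T`), and the free trajectory's initial position and velocity
are independent of `θ`, then the gradient of the cost is the `β → 0` limit of the
PFVP finite-difference estimator. -/
theorem pfvp_gradient_estimator
    {d k : ℕ} (T : ℝ) (hT : 0 < T)
    (L₀ : EuclideanSpace ℝ (Fin d) → EuclideanSpace ℝ (Fin d) → EuclideanSpace ℝ (Fin k) → ℝ)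
    (hL₀ : ContDiff ℝ 2 (fun q : (EuclideanSpace ℝ (Fin d) × EuclideanSpace ℝ (Fin d))
        × EuclideanSpace ℝ (Fin k) => L₀ q.1.1 q.1.2 q.2))
    (c : EuclideanSpace ℝ (Fin d) → ℝ) (hc : ContDiff ℝ 2 c)
    (S : ℝ → EuclideanSpace ℝ (Fin k) → ℝ → EuclideanSpace ℝ (Fin d))
    (hS : ContDiff ℝ 2 (fun q : ℝ × EuclideanSpace ℝ (Fin k) × ℝ => S q.1 q.2.1 q.2.2))
    -- each curve solves the Euler-Lagrange equation of the augmented Lagrangian L_β: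
    (hEL : ∀ (β : ℝ) (θ : EuclideanSpace ℝ (Fin k)), ∀ t ∈ Set.Icc (0:ℝ) T,
      gradient (fun a => L₀ a (deriv (S β θ) t) θ) (S β θ t) + β • gradient c (S β θ t)
        = deriv (fun τ => gradient (fun w => L₀ (S β θ τ) w θ) (deriv (S β θ) τ)) t)
    -- (ii) final position and velocity are independent of β:
    (hfinal : ∀ (β : ℝ) (θ : EuclideanSpace ℝ (Fin k)),
      S β θ T = S 0 θ T ∧ deriv (S β θ) T = deriv (S 0 θ) T)
    -- (iii) the free trajectory's initial position and velocity are independent of θ: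
    (hinit : ∀ θ θ' : EuclideanSpace ℝ (Fin k),
      S 0 θ 0 = S 0 θ' 0 ∧ deriv (S 0 θ) 0 = deriv (S 0 θ') 0)
    (C : EuclideanSpace ℝ (Fin k) → ℝ)
    (hC : ∀ θ, C θ = ∫ t in (0:ℝ)..T, c (S 0 θ t))
    (θ : EuclideanSpace ℝ (Fin k)) :
    Filter.Tendsto
      (fun β : ℝ =>
        β⁻¹ •
          ((∫ t in (0:ℝ)..T,
              (gradient (fun θ' => L₀ (S β θ t) (deriv (S β θ) t) θ' + β * c (S β θ t)) θ
                - gradient (fun θ' => L₀ (S 0 θ t) (deriv (S 0 θ) t) θ') θ))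
            + gradient (fun θ' =>
                ⟪gradient (fun w => L₀ (S 0 θ 0) w θ') (deriv (S 0 θ) 0),
                  S β θ 0 - S 0 θ 0⟫) θ))
      (𝓝[≠] (0:ℝ)) (𝓝 (gradient C θ)) := by
  classical
  set σ : (ℝ × EuclideanSpace ℝ (Fin k)) × ℝ → EuclideanSpace ℝ (Fin d) :=
    fun z => S z.1.1 z.1.2 z.2 with hσdef
  have hσ : ContDiff ℝ 2 σ := by
    have h1 : ContDiff ℝ 2 (fun z : (ℝ × EuclideanSpace ℝ (Fin k)) × ℝ =>
      (z.1.1, z.1.2, z.2)) := by fun_prop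
    exact hS.comp h1
  set M := glepM L₀ c with hMdef
  have hM : ContDiff ℝ 2 M := glepM_contDiff hL₀ hc
  have hvel : ∀ β θ t, deriv (S β θ) t = glepVel σ ((β, θ), t) := fun β θ t =>
    glepVel_eq hσ (β, θ) t
  have hmom : ∀ β θ t, glepMom M σ ((β, θ), t)
      = fderiv ℝ (fun w => L₀ (S β θ t) w θ) (deriv (S β θ) t) := fun β θ t => by
    rw [hvel]; exact (glepM_v hM _ _ β θ).symm
  have hmomd : Differentiable ℝ (glepMom M σ) := (glepMom_contDiff hM hσ).differentiable (by norm_num)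
  have hsensd : Differentiable ℝ (glepSens σ) := (glepSens_contDiff hσ).differentiable (by norm_num)
  have hEL' : ∀ u, ∀ t ∈ Set.Icc (0:ℝ) T,
      HasDerivAt (fun τ => glepMom M σ (u, τ)) (glepForce M σ (u, t)) t := by
    rintro ⟨β, θ⟩ t ht
    have h3 : HasDerivAt (fun τ : ℝ => (((β, θ), τ) : (ℝ × EuclideanSpace ℝ (Fin k)) × ℝ))
      (0, (1:ℝ)) t := (hasDerivAt_const t _).prodMk (hasDerivAt_id t)
    have h4 : HasDerivAt (fun τ : ℝ => glepMom M σ ((β, θ), τ)) _ t :=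
      (hmomd ((β, θ), t)).hasFDerivAt.comp_hasDerivAt t h3
    convert h4 using 1
    have h5 := hEL β θ t ht
    have h6 : (fun τ => gradient (fun w => L₀ (S β θ τ) w θ) (deriv (S β θ) τ))
        = fun τ => (InnerProductSpace.toDual ℝ (EuclideanSpace ℝ (Fin d))).symm
            (glepMom M σ ((β, θ), τ)) := by
      ext1 τ
      rw [hmom, gradient]
    have h7 := ((InnerProductSpace.toDual ℝ (EuclideanSpace ℝ (Fin d))).symm
      ).toContinuousLinearEquiv.toContinuousLinearMap.hasFDerivAt.comp_hasDerivAt t h4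
    have h8 : deriv (fun τ => (InnerProductSpace.toDual ℝ (EuclideanSpace ℝ (Fin d))).symm
            (glepMom M σ ((β, θ), τ))) t = _ := h7.deriv
    rw [h6, h8] at h5
    have h9 := congrArg (InnerProductSpace.toDual ℝ (EuclideanSpace ℝ (Fin d))) h5
    rw [map_add] at h9
    have h10 : glepForce M σ ((β, θ), t) = fderiv ℝ (fun a => L₀ a (deriv (S β θ) t) θ) (S β θ t)
        + β • fderiv ℝ c (S β θ t) := by
      rw [hvel]; exact (glepM_a hc hM _ _ β θ).symm
    rw [h10, ← toDual_gradient, ← toDual_gradient]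
    simpa using h9
  apply glep_tendsto
  intro e
  -- directions
  set u₀ : ℝ × EuclideanSpace ℝ (Fin k) := (0, θ) with hu₀
  set eβ : ℝ × EuclideanSpace ℝ (Fin k) := (1, 0) with heβ
  set eθ : ℝ × EuclideanSpace ℝ (Fin k) := (0, e) with heθ
  have hlβ : ∀ (β x : ℝ) θ, ((β, θ) : ℝ × EuclideanSpace ℝ (Fin k)) + x • eβ = (β + x, θ) := by
    intro β x θ; simp [heβ]
  have hlθ : ∀ (β x : ℝ) θ, ((β, θ) : ℝ × EuclideanSpace ℝ (Fin k)) + x • eθ = (β, θ + x • e) := by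
    intro β x θ; simp [heθ]
  -- boundary sensitivities
  have hsT : ∀ θ, glepSens σ ((0, θ), T) eβ = 0 := by
    intro θ
    have h1 := glepSens_line hσ (0, θ) eβ T
    have h2 : (fun x : ℝ => σ ((0, θ) + x • eβ, T)) = fun _ => S 0 θ T := by
      ext1 x; rw [hlβ]; exact (hfinal _ θ).1
    rw [h2] at h1
    exact h1.unique (hasDerivAt_const _ _)
  have hsTθ : ∀ β, glepSens σ ((β, θ), T) eθ = glepSens σ ((0, θ), T) eθ := by
    intro β
    have h1 := glepSens_line hσ (β, θ) eθ T
    have h2 := glepSens_line hσ (0, θ) eθ T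
    have h3 : (fun x : ℝ => σ ((β, θ) + x • eθ, T)) = fun x => σ ((0, θ) + x • eθ, T) := by
      ext1 x; rw [hlθ, hlθ]; exact (hfinal _ _).1
    rw [h3] at h1
    exact h1.unique h2
  have hs0θ : glepSens σ ((0, θ), 0) eθ = 0 := by
    have h1 := glepSens_line hσ (0, θ) eθ 0
    have h2 : (fun x : ℝ => σ ((0, θ) + x • eθ, 0)) = fun _ => S 0 θ 0 := by
      ext1 x; rw [hlθ]; exact (hinit _ θ).1
    rw [h2] at h1
    exact h1.unique (hasDerivAt_const _ _)
  have hmT : ∀ β, glepMom M σ ((β, θ), T) = glepMom M σ ((0, θ), T) := by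
    intro β
    rw [hmom, hmom, (hfinal β θ).1, (hfinal β θ).2]
  have hparc : ∀ u, Continuous fun t : ℝ => glepPar M σ (u, t) := fun u =>
    (glepPar_contDiff hM hσ).continuous.comp (by fun_prop)
  -- cost
  have hCd : DifferentiableAt ℝ C θ := by
    have h1 : ContDiff ℝ 1 (fun z : EuclideanSpace ℝ (Fin k) × ℝ => c (σ ((0, z.1), z.2))) := by
      have h2 : ContDiff ℝ 2 (fun z : EuclideanSpace ℝ (Fin k) × ℝ =>
        (((0, z.1), z.2) : (ℝ × EuclideanSpace ℝ (Fin k)) × ℝ)) := by fun_prop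
      exact (hc.comp (hσ.comp h2)).of_le (by norm_num)
    have h3 := (glep_param_integral T _ h1 θ).differentiableAt
    have h4 : C = fun θ => ∫ t in (0:ℝ)..T, c (σ ((0, θ), t)) := funext hC
    rw [h4]; exact h3
  have hCline : HasDerivAt (fun x : ℝ => C (θ + x • e)) (fderiv ℝ C θ e) 0 := by
    have hl : HasDerivAt (fun x : ℝ => θ + x • e) e 0 := by
      simpa using ((hasDerivAt_id (0:ℝ)).smul_const e).const_add θ
    have hd' : HasFDerivAt C (fderiv ℝ C θ) (θ + (0:ℝ) • e) := by
      simpa using hCd.hasFDerivAt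
    exact hd'.comp_hasDerivAt (0:ℝ) hl
  -- φ
  have hφ : HasDerivAt (fun x : ℝ => glepDA T M σ (u₀ + x • eθ) eβ)
      (fderiv ℝ C θ e - (fderiv ℝ (glepMom M σ) (u₀, 0) (eθ, 0) (glepSens σ (u₀, 0) eβ)
        + glepMom M σ (u₀, 0) (fderiv ℝ (glepSens σ) (u₀, 0) (eθ, 0) eβ))) 0 := by
    have hq := glep_line hmomd u₀ eθ 0
    have hb := (glep_line hsensd u₀ eθ 0).clm_apply (hasDerivAt_const (0:ℝ) eβ)
    have h1 := hCline.sub (hq.clm_apply hb)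
    convert! h1 using 1
    · ext x
      simp only [glepDA, hu₀, hlθ, add_apply, sub_apply,
        ContinuousLinearMap.comp_apply, hsT, map_zero, Pi.sub_apply]
      rw [ContinuousLinearMap.intervalIntegral_apply ((hparc _).intervalIntegrable _ _), hC, zero_sub,
        ← sub_eq_add_neg]
      congr 1
      exact intervalIntegral.integral_congr fun t _ => glepM_β hM _ _ _ _
    · simp
  -- ψ
  set I : ℝ → ℝ := fun β => ∫ t in (0:ℝ)..T, glepPar M σ ((β, θ), t) eθ with hI
  have hId : DifferentiableAt ℝ I 0 := by
    have h1 : ContDiff ℝ 1 (fun z : ℝ × ℝ => glepPar M σ ((z.1, θ), z.2) eθ) := by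
      have h2 : ContDiff ℝ 1 (fun z : ℝ × ℝ =>
        (((z.1, θ), z.2) : (ℝ × EuclideanSpace ℝ (Fin k)) × ℝ)) := by fun_prop
      exact ((glepPar_contDiff hM hσ).comp h2).clm_apply contDiff_const
    exact (glep_param_integral T _ h1 0).differentiableAt
  have hψ : HasDerivAt (fun x : ℝ => glepDA T M σ (u₀ + x • eβ) eθ)
      (deriv I 0 - glepMom M σ (u₀, 0) (fderiv ℝ (glepSens σ) (u₀, 0) (eβ, 0) eθ)) 0 := by
    have hq := glep_line hmomd u₀ eβ 0
    have hb := (glep_line hsensd u₀ eβ 0).clm_apply (hasDerivAt_const (0:ℝ) eθ)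
    have h1 := (hId.hasDerivAt.add_const
      (glepMom M σ ((0, θ), T) (glepSens σ ((0, θ), T) eθ))).sub (hq.clm_apply hb)
    convert! h1 using 1
    · ext x
      simp only [glepDA, hu₀, hlβ, add_apply, sub_apply,
        ContinuousLinearMap.comp_apply, hsTθ, hmT, Pi.sub_apply]
      rw [ContinuousLinearMap.intervalIntegral_apply ((hparc _).intervalIntegrable _ _)]
      simp only [hI, zero_add]
      ring
    · simp [hu₀, hs0θ]
  have hmix := glep_mixed hT hM hσ hEL' u₀ eθ eβ hφ hψ
  rw [glepSens_symm hσ] at hmix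
  have hfin : fderiv ℝ C θ e
      = deriv I 0 + fderiv ℝ (glepMom M σ) (u₀, 0) (eθ, 0) (glepSens σ (u₀, 0) eβ) := by
    linarith
  -- boundary gradient term
  have hbd : ∀ Δ : EuclideanSpace ℝ (Fin d), ⟪gradient (fun θ' =>
                ⟪gradient (fun w => L₀ (S 0 θ 0) w θ') (deriv (S 0 θ) 0), Δ⟫) θ, e⟫
      = fderiv ℝ (glepMom M σ) (u₀, 0) (eθ, 0) Δ := by
    intro Δ
    rw [inner_gradient_left]
    have h1 : (fun θ' => ⟪gradient (fun w => L₀ (S 0 θ 0) w θ') (deriv (S 0 θ) 0), Δ⟫)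
        = fun θ' => glepMom M σ ((0, θ'), 0) Δ := by
      ext1 θ'
      rw [inner_gradient_left, hmom, (hinit θ θ').1, (hinit θ θ').2]
    rw [h1]
    have h2 : HasFDerivAt (fun θ' : EuclideanSpace ℝ (Fin k) =>
        ((((0:ℝ), θ'), (0:ℝ)) : (ℝ × EuclideanSpace ℝ (Fin k)) × ℝ))
        ((ContinuousLinearMap.inl ℝ (ℝ × EuclideanSpace ℝ (Fin k)) ℝ).comp
          (ContinuousLinearMap.inr ℝ ℝ (EuclideanSpace ℝ (Fin k)))) θ :=
      HasFDerivAt.comp (g := fun p : ℝ × EuclideanSpace ℝ (Fin k) => (p, (0:ℝ))) θ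
        (hasFDerivAt_prodMk_left ((0:ℝ), θ) (0:ℝ)) (hasFDerivAt_prodMk_right (0:ℝ) θ)
    have h3p := HasFDerivAt.comp (g := glepMom M σ) θ (hmomd ((0, θ), 0)).hasFDerivAt h2
    have h3 : HasFDerivAt (fun θ' => glepMom M σ ((0, θ'), 0)) _ θ := h3p
    have h4 := h3.clm_apply (hasFDerivAt_const Δ θ)
    rw [h4.fderiv]
    simp [hu₀, heθ]
  -- bulk term
  have hgrad : ∀ β t, gradient (fun θ' => L₀ (S β θ t) (deriv (S β θ) t) θ' + β * c (S β θ t)) θ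
      = (InnerProductSpace.toDual ℝ (EuclideanSpace ℝ (Fin k))).symm
        ((glepPar M σ ((β, θ), t)).comp (ContinuousLinearMap.inr ℝ ℝ (EuclideanSpace ℝ (Fin k)))) := by
    intro β t
    rw [gradient]
    congr 1
    ext e'
    rw [hvel]
    exact glepM_θ hM _ _ β θ e'
  have hgrad0 : ∀ t, gradient (fun θ' => L₀ (S 0 θ t) (deriv (S 0 θ) t) θ') θ
      = (InnerProductSpace.toDual ℝ (EuclideanSpace ℝ (Fin k))).symm
        ((glepPar M σ ((0, θ), t)).comp (ContinuousLinearMap.inr ℝ ℝ (EuclideanSpace ℝ (Fin k)))) := by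
    intro t
    rw [← hgrad]
    simp
  have hbulk : ∀ β : ℝ, ⟪∫ t in (0:ℝ)..T,
              (gradient (fun θ' => L₀ (S β θ t) (deriv (S β θ) t) θ' + β * c (S β θ t)) θ
                - gradient (fun θ' => L₀ (S 0 θ t) (deriv (S 0 θ) t) θ') θ), e⟫ = I β - I 0 := by
    intro β
    simp_rw [hgrad, hgrad0]
    have hcg : ∀ β : ℝ, Continuous fun t =>
        (InnerProductSpace.toDual ℝ (EuclideanSpace ℝ (Fin k))).symm
        ((glepPar M σ ((β, θ), t)).comp (ContinuousLinearMap.inr ℝ ℝ (EuclideanSpace ℝ (Fin k)))) :=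
      fun β => (LinearIsometryEquiv.continuous _).comp ((hparc _).clm_comp continuous_const)
    have h1 := (innerSL ℝ e).intervalIntegral_comp_comm
      (((hcg β).sub (hcg 0)).intervalIntegrable (μ := MeasureTheory.volume) 0 T)
    rw [real_inner_comm]
    rw [innerSL_apply_apply] at h1
    refine h1.symm.trans ?_
    rw [hI]
    simp only
    rw [← intervalIntegral.integral_sub
      (((hparc _).clm_apply continuous_const).intervalIntegrable _ _)
      (((hparc _).clm_apply continuous_const).intervalIntegrable _ _)]
    refine intervalIntegral.integral_congr fun t _ => ?_
    simp only [innerSL_apply_apply]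
    rw [real_inner_comm, Pi.sub_apply, inner_sub_left, InnerProductSpace.toDual_symm_apply,
      InnerProductSpace.toDual_symm_apply]
    simp [heθ]
  rw [inner_gradient_left, hfin]
  have hlim1 : Filter.Tendsto (fun β : ℝ => β⁻¹ * (I β - I 0)) (𝓝[≠] 0) (𝓝 (deriv I 0)) := by
    have := hId.hasDerivAt.tendsto_slope
    simpa [slope_fun_def] using this
  have hlim2 : Filter.Tendsto (fun β : ℝ => β⁻¹ • (S β θ 0 - S 0 θ 0)) (𝓝[≠] 0)
      (𝓝 (glepSens σ (u₀, 0) eβ)) := by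
    have h1 := (glepSens_line hσ u₀ eβ 0).tendsto_slope
    simp only [hu₀, hlβ, zero_add] at h1
    simpa [slope_fun_def, hσdef] using h1
  have hlim3 := ((fderiv ℝ (glepMom M σ) (u₀, 0) (eθ, 0)).continuous.tendsto _).comp hlim2
  refine (hlim1.add hlim3).congr fun β => ?_
  rw [real_inner_smul_left, inner_add_left, hbulk, hbd]
  simp only [Function.comp_apply, map_smul, smul_eq_mul]
  ring
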